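/- arXiv:2011.05451 — 2 statements merged into one kernel-verified Lean document; each statement's English description precedes it below -/
import Mathlib

section
/- Let L ≥ 1 and let f_{i,j} : ℝ → ℂ (for 0 ≤ i, j ≤ L−1) be continuous 1-periodic functions, each with an absolutely convergent Fourier series. Then ∫_{[0,1]^{L²}} ∫_{[0,1]^{L²}} ∏_{i=0}^{L−1} ∏_{j=0}^{L−1} f_{i,j}(x^a_{i,j} − x^a_{i,(j+1) mod L} − x^b_{i,j} + x^b_{(i+1) mod L,j}) dx^a dx^b = ∑_{ℓ∈ℤ} ∏_{i=0}^{L−1} ∏_{j=0}^{L−1} f̂_{i,j}(ℓ), where x^a and x^b each denote L² integration variables indexed by pairs (i,j) with both indices taken modulo L. -/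
open MeasureTheory

/-- The `ℓ`-th Fourier coefficient of a 1-periodic function `f : ℝ → ℂ`,
`f̂(ℓ) = ∫₀¹ f(x) e^{−2πiℓx} dx`. -/
noncomputable def fourierCoeffR (f : ℝ → ℂ) (ℓ : ℤ) : ℂ :=
  ∫ x in (0:ℝ)..1, f x * Complex.exp (-(2 * Real.pi * Complex.I * ℓ * x))

/-- A finite product of absolutely convergent series expands as an absolutely convergent series
over tuples of indices. -/
theorem summable_norm_prod_and_prod_tsum {n : ℕ} {β : Type*} (c : Fin n → β → ℂ)
    (hc : ∀ i, Summable fun b => ‖c i b‖) :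
    (Summable fun m : Fin n → β => ‖∏ i, c i (m i)‖) ∧
      ∏ i, ∑' b, c i b = ∑' m : Fin n → β, ∏ i, c i (m i) := by
  induction n with
  | zero => simp [Summable.of_finite]
  | succ n ih =>
    obtain ⟨hs, he⟩ := ih (fun i => c i.succ) fun i => hc i.succ
    let e : β × (Fin n → β) ≃ (Fin (n + 1) → β) := Fin.consEquiv fun _ => β
    have hprod : ∀ p, ∏ i, c i (e p i) = c 0 p.1 * ∏ i, c (Fin.succ i) (p.2 i) := fun p => by
      simp [e, Fin.prod_univ_succ, Fin.consEquiv]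
    constructor
    · rw [← e.summable_iff]
      refine ((hc 0).mul_norm hs).congr fun p => ?_
      simp only [Function.comp_apply, hprod]
    · rw [Fin.prod_univ_succ, he, ← e.tsum_eq, tsum_mul_tsum_of_summable_norm (hc 0) hs]
      simp only [hprod]

theorem integral_tsum_mul_of_norm_le_one {ι X : Type*} [Countable ι] [MeasurableSpace X]
    {μ : Measure X} [IsProbabilityMeasure μ] {c : ι → ℂ} (hc : Summable fun m => ‖c m‖)
    {g : ι → X → ℂ} (hg : ∀ m, AEStronglyMeasurable (g m) μ) (hle : ∀ m x, ‖g m x‖ ≤ 1) :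
    ∫ x, ∑' m, c m * g m x ∂μ = ∑' m, c m * ∫ x, g m x ∂μ := by
  have hint : ∀ m, Integrable (g m) μ := fun m =>
    Integrable.of_bound (hg m) 1 (Filter.Eventually.of_forall (hle m))
  rw [← integral_tsum_of_summable_integral_norm fun m => (hint m).const_mul (c m)]
  · simp only [integral_const_mul]
  · refine hc.of_nonneg_of_le (fun m => integral_nonneg fun x => norm_nonneg _) fun m => ?_
    simp only [norm_mul, integral_const_mul]
    refine mul_le_of_le_one_right (norm_nonneg _) ?_
    simpa using integral_mono (hint m).norm (integrable_const (1 : ℝ)) (hle m)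

/-- The character `x ↦ e^{2πikx}`. -/
noncomputable def character (k : ℤ) (x : ℝ) : ℂ :=
  Complex.exp (2 * Real.pi * Complex.I * k * x)

theorem norm_character (k : ℤ) (x : ℝ) : ‖character k x‖ = 1 := by
  rw [character, show (2 * Real.pi * Complex.I * k * x : ℂ) =
    ((2 * Real.pi * k * x : ℝ) : ℂ) * Complex.I by push_cast; ring]
  exact Complex.norm_exp_ofReal_mul_I _

@[fun_prop]
theorem continuous_character (k : ℤ) : Continuous (character k) := by
  unfold character
  fun_prop

theorem character_add_right (k : ℤ) (x y : ℝ) :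
    character k (x + y) = character k x * character k y := by
  simp only [character, ← Complex.exp_add]
  push_cast
  ring_nf

theorem character_sub_left (k l : ℤ) (x : ℝ) :
    character (k - l) x = character k x * character l (-x) := by
  simp only [character, ← Complex.exp_add]
  push_cast
  ring_nf

theorem integral_character (k : ℤ) :
    ∫ x in Set.Icc (0 : ℝ) 1, character k x = if k = 0 then 1 else 0 := by
  rw [integral_Icc_eq_integral_Ioc, ← intervalIntegral.integral_of_le zero_le_one]
  split_ifs with hk
  · simp [character, hk]
  · have hne : (2 * Real.pi * Complex.I * k : ℂ) ≠ 0 := by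
      simp [hk, Real.pi_ne_zero]
    simp only [character]
    rw [integral_exp_mul_complex hne]
    have : Complex.exp (2 * Real.pi * Complex.I * k) = 1 :=
      Complex.exp_eq_one_iff.2 ⟨k, by ring⟩
    simp [this]

theorem volume_restrict_Icc_pi {ι : Type*} [Fintype ι] {E : Type*} [MeasureSpace E]
    [Preorder E] [SigmaFinite (volume : Measure E)] (a b : ι → E) :
    (volume : Measure (ι → E)).restrict (Set.Icc a b) =
      Measure.pi fun i => volume.restrict (Set.Icc (a i) (b i)) := by
  rw [← Set.pi_univ_Icc, volume_pi, Measure.restrict_pi_pi]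

section Lattice

variable {L : ℕ}

/-- The character of the `L × L` torus with frequencies `k`. -/
noncomputable def latticeCharacter (k : Fin L → Fin L → ℤ) (x : Fin L → Fin L → ℝ) : ℂ :=
  ∏ i, ∏ j, character (k i j) (x i j)

theorem norm_latticeCharacter (k : Fin L → Fin L → ℤ) (x : Fin L → Fin L → ℝ) :
    ‖latticeCharacter k x‖ = 1 := by
  simp [latticeCharacter, norm_prod, norm_character]

theorem continuous_latticeCharacter (k : Fin L → Fin L → ℤ) :
    Continuous (latticeCharacter k) := by
  unfold latticeCharacter
  fun_prop

theorem isProbabilityMeasure_restrict_unitBox :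
    IsProbabilityMeasure ((volume : Measure (Fin L → Fin L → ℝ)).restrict (Set.Icc 0 1)) := by
  have : IsProbabilityMeasure ((volume : Measure ℝ).restrict (Set.Icc 0 1)) := ⟨by simp⟩
  simp only [volume_restrict_Icc_pi, Pi.zero_apply, Pi.one_apply]
  infer_instance

theorem integral_latticeCharacter (k : Fin L → Fin L → ℤ) :
    ∫ x in Set.Icc (0 : Fin L → Fin L → ℝ) 1, latticeCharacter k x =
      if ∀ i j, k i j = 0 then 1 else 0 := by
  simp only [latticeCharacter]
  rw [volume_restrict_Icc_pi,
    integral_fintype_prod_eq_prod fun i (y : Fin L → ℝ) => ∏ j, character (k i j) (y j)]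
  have hrow : ∀ i, ∫ y in Set.Icc ((0 : Fin L → Fin L → ℝ) i) ((1 : Fin L → Fin L → ℝ) i),
      ∏ j, character (k i j) (y j) = ∏ j, if k i j = 0 then 1 else 0 := fun i => by
    rw [volume_restrict_Icc_pi, integral_fintype_prod_eq_prod fun j => character (k i j)]
    simp only [Pi.zero_apply, Pi.one_apply, integral_character]
  simp only [hrow, Fintype.prod_boole]
  convert Fintype.prod_boole (M₀ := ℂ) (p := fun i => ∀ j, k i j = 0)

variable [NeZero L]

/-- Summation by parts on the periodic lattice. -/
theorem prod_character_plaquette (m : Fin L → Fin L → ℤ) (xa xb : Fin L → Fin L → ℝ) :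
    ∏ i, ∏ j, character (m i j) (xa i j - xa i (j + 1) - xb i j + xb (i + 1) j) =
      latticeCharacter (fun i j => m i j - m i (j - 1)) xa *
        latticeCharacter (fun i j => m (i - 1) j - m i j) xb := by
  have ha : ∀ i, ∏ j, character (m i (j - 1)) (-xa i j) =
      ∏ j, character (m i j) (-xa i (j + 1)) := fun i => by
    rw [← Equiv.prod_comp (Equiv.addRight (1 : Fin L))]
    simp
  have hb : ∏ i, ∏ j, character (m (i - 1) j) (xb i j) =
      ∏ i, ∏ j, character (m i j) (xb (i + 1) j) := by
    rw [← Equiv.prod_comp (Equiv.addRight (1 : Fin L))]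
    simp
  simp only [latticeCharacter, character_sub_left, sub_eq_add_neg (G := ℝ),
    character_add_right, Finset.prod_mul_distrib, ha, hb]
  ring

theorem eq_apply_zero_of_apply_sub_one {β : Type*} {g : Fin L → β}
    (hg : ∀ j, g (j - 1) = g j) (j : Fin L) : g j = g 0 := by
  obtain _ | n := L
  · exact j.elim0
  · induction j using Fin.induction with
    | zero => rfl
    | succ i ih =>
      rw [← hg, ← ih, ← Fin.coeSucc_eq_succ, add_sub_cancel_right]

theorem lattice_differences_eq_zero_iff (m : Fin L → Fin L → ℤ) :
    ((∀ i j, m i j - m i (j - 1) = 0) ∧ ∀ i j, m (i - 1) j - m i j = 0) ↔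
      ∃ ℓ, (fun _ _ => ℓ) = m := by
  constructor
  · rintro ⟨ha, hb⟩
    refine ⟨m 0 0, funext fun i => funext fun j => ?_⟩
    rw [eq_apply_zero_of_apply_sub_one (g := m i) (fun j => (sub_eq_zero.1 (ha i j)).symm) j,
      eq_apply_zero_of_apply_sub_one (g := fun i => m i 0) (fun i => sub_eq_zero.1 (hb i 0)) i]
  · rintro ⟨ℓ, rfl⟩
    simp

end Lattice

theorem stmt3 (L : ℕ) [NeZero L] (f : Fin L → Fin L → ℝ → ℂ)
    (hcont : ∀ i j, Continuous (f i j))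
    (hper : ∀ i j (x : ℝ), f i j (x + 1) = f i j x)
    (habs : ∀ i j, Summable fun ℓ : ℤ => ‖fourierCoeffR (f i j) ℓ‖)
    (hrep : ∀ i j (x : ℝ),
      f i j x = ∑' ℓ : ℤ, fourierCoeffR (f i j) ℓ *
        Complex.exp (2 * Real.pi * Complex.I * ℓ * x)) :
    (∫ xa in Set.Icc (0 : Fin L → Fin L → ℝ) 1,
      ∫ xb in Set.Icc (0 : Fin L → Fin L → ℝ) 1,
        ∏ i, ∏ j, f i j (xa i j - xa i (j + 1) - xb i j + xb (i + 1) j)) =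
      ∑' ℓ : ℤ, ∏ i, ∏ j, fourierCoeffR (f i j) ℓ := by
  have := isProbabilityMeasure_restrict_unitBox (L := L)
  let C : (Fin L → Fin L → ℤ) → ℂ := fun m => ∏ i, ∏ j, fourierCoeffR (f i j) (m i j)
  have hC : Summable fun m => ‖C m‖ :=
    (summable_norm_prod_and_prod_tsum
      (fun i (r : Fin L → ℤ) => ∏ j, fourierCoeffR (f i j) (r j))
      fun i => (summable_norm_prod_and_prod_tsum _ (habs i)).1).1
  have hexpand : ∀ xa xb : Fin L → Fin L → ℝ,
      ∏ i, ∏ j, f i j (xa i j - xa i (j + 1) - xb i j + xb (i + 1) j) =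
        ∑' m, C m * latticeCharacter (fun i j => m i j - m i (j - 1)) xa *
          latticeCharacter (fun i j => m (i - 1) j - m i j) xb := by
    intro xa xb
    let t : Fin L → Fin L → ℤ → ℂ := fun i j ℓ => fourierCoeffR (f i j) ℓ *
      character ℓ (xa i j - xa i (j + 1) - xb i j + xb (i + 1) j)
    have ht : ∀ i j, Summable fun ℓ => ‖t i j ℓ‖ := fun i j => by
      simpa only [t, norm_mul, norm_character, mul_one] using habs i j
    have hrow := fun i => summable_norm_prod_and_prod_tsum _ (ht i)
    calc _ = ∏ i, ∏ j, ∑' ℓ, t i j ℓ :=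
          Finset.prod_congr rfl fun i _ => Finset.prod_congr rfl fun j _ => hrep i j _
      _ = ∏ i, ∑' r : Fin L → ℤ, ∏ j, t i j (r j) :=
          Finset.prod_congr rfl fun i _ => (hrow i).2
      _ = ∑' m : Fin L → Fin L → ℤ, ∏ i, ∏ j, t i j (m i j) :=
          (summable_norm_prod_and_prod_tsum _ fun i => (hrow i).1).2
      _ = _ := tsum_congr fun m => by
          simp only [t, C, Finset.prod_mul_distrib, prod_character_plaquette, mul_assoc]
  have hmeas : ∀ k : Fin L → Fin L → ℤ, AEStronglyMeasurable (latticeCharacter k)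
      ((volume : Measure (Fin L → Fin L → ℝ)).restrict (Set.Icc 0 1)) := fun k =>
    (continuous_latticeCharacter k).aestronglyMeasurable
  have hinner : ∀ xa : Fin L → Fin L → ℝ,
      ∫ xb in Set.Icc (0 : Fin L → Fin L → ℝ) 1,
        ∏ i, ∏ j, f i j (xa i j - xa i (j + 1) - xb i j + xb (i + 1) j) =
      ∑' m, (C m * if ∀ i j, m (i - 1) j - m i j = 0 then 1 else 0) *
        latticeCharacter (fun i j => m i j - m i (j - 1)) xa := by
    intro xa
    simp only [hexpand]
    rw [integral_tsum_mul_of_norm_le_one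
      (by simpa only [norm_mul, norm_latticeCharacter, mul_one] using hC)
      (fun m => hmeas _) fun m xb => (norm_latticeCharacter _ xb).le]
    refine tsum_congr fun m => ?_
    rw [integral_latticeCharacter, mul_right_comm]
  simp only [hinner]
  rw [integral_tsum_mul_of_norm_le_one (hC.of_nonneg_of_le (fun m => norm_nonneg _) fun m => ?_)
      (fun m => hmeas _) fun m xa => (norm_latticeCharacter _ xa).le]
  · have hconst : Function.Injective fun (ℓ : ℤ) (_ _ : Fin L) => ℓ := fun k l h =>
      congrFun (congrFun h 0) 0
    rw [← hconst.tsum_eq]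
    · refine tsum_congr fun ℓ => ?_
      simp [C, integral_latticeCharacter]
    · intro m hm
      refine (lattice_differences_eq_zero_iff m).1 ?_
      simp only [integral_latticeCharacter, Function.mem_support, ne_eq, mul_eq_zero,
        ite_eq_right_iff, one_ne_zero, imp_false, not_or, not_not] at hm
      exact ⟨hm.2, hm.1.2⟩
  · split_ifs <;> simp
end

section
/- Let L ≥ 2 be even and let f_{i,j} : ℝ → ℂ (for 0 ≤ i, j ≤ L−1) be continuous 1-periodic functions, each with an absolutely convergent Fourier series. For integration variables x^a_{i,j}, x^b_{i,j} with indices modulo L, set ξ_{i,j}(x^a,x^b) = x^a_{i,j} + x^a_{i+1,j} + x^b_{i+1,j} + x^b_{i+1,j+1} − x^a_{i+1,j+1} − x^a_{i,j+1} − x^b_{i,j+1} − x^b_{i,j}. Then ∫_{[0,1]^{L²}} ∫_{[0,1]^{L²}} ∏_{i=0}^{L−1} ∏_{j=0}^{L−1} f_{i,j}(ξ_{i,j}(x^a,x^b)) dx^a dx^b = (∑_{ℓ∈ℤ} ∏_{(i,j): i+j odd} f̂_{i,j}(ℓ)) · (∑_{ℓ∈ℤ} ∏_{(i,j): i+j even}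 f̂_{i,j}(ℓ)), where the products run over 0 ≤ i, j ≤ L−1 with i+j of the stated parity. -/
open MeasureTheory

/-- The character `x ↦ e^{2πinx}`. -/
noncomputable def wave (n : ℤ) (x : ℝ) : ℂ :=
  Complex.exp (2 * Real.pi * Complex.I * n * x)

theorem wave_eq (n : ℤ) (x : ℝ) :
    wave n x = Complex.exp (2 * Real.pi * Complex.I * ((n * x : ℝ) : ℂ)) := by
  unfold wave
  push_cast
  ring_nf

theorem norm_wave (n : ℤ) (x : ℝ) : ‖wave n x‖ = 1 := by
  have h : 2 * Real.pi * Complex.I * n * x = ((2 * Real.pi * n * x : ℝ) : ℂ) * Complex.I := by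
    push_cast
    ring
  rw [wave, h, Complex.norm_exp_ofReal_mul_I]

theorem continuous_wave (n : ℤ) : Continuous (wave n) := by
  unfold wave
  fun_prop

theorem integral_wave (n : ℤ) :
    ∫ x in Set.Icc (0 : ℝ) 1, wave n x = if n = 0 then 1 else 0 := by
  rw [integral_Icc_eq_integral_Ioc, ← intervalIntegral.integral_of_le zero_le_one]
  unfold wave
  split_ifs with h
  · simp [h]
  · have hc : 2 * Real.pi * Complex.I * n ≠ 0 := by
      simp [h, Real.pi_ne_zero]
    rw [integral_exp_mul_complex hc]
    have h1 : Complex.exp (2 * Real.pi * Complex.I * n * (1 : ℝ)) = 1 :=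
      Complex.exp_eq_one_iff.mpr ⟨n, by push_cast; ring⟩
    rw [h1]
    simp

/-- Finite products of absolutely convergent series expand into one absolutely convergent series
over all choices of indices. -/
theorem summable_norm_prod_and_tsum_prod {κ ι : Type*} [Fintype ι] (f : ι → κ → ℂ)
    (hf : ∀ i, Summable fun k => ‖f i k‖) :
    (Summable fun m : ι → κ => ‖∏ i, f i (m i)‖) ∧
      ∑' m : ι → κ, ∏ i, f i (m i) = ∏ i, ∑' k, f i k := by
  let P (ι : Type _) : Prop := ∀ [Fintype ι] (f : ι → κ → ℂ), (∀ i, Summable fun k => ‖f i k‖) →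
    (Summable fun m : ι → κ => ‖∏ i, f i (m i)‖) ∧
      ∑' m : ι → κ, ∏ i, f i (m i) = ∏ i, ∑' k, f i k
  suffices h : P ι from h f hf
  refine Finite.induction_empty_option (P := P) ?_ ?_ ?_ ι
  · intro α β e ih _ f hf
    let _ : Fintype α := Fintype.ofEquiv β e.symm
    obtain ⟨h1, h2⟩ := ih (fun a => f (e a)) fun a => hf (e a)
    have key (m : α → κ) :
        ∏ i, f i ((e.arrowCongr (Equiv.refl κ)) m i) = ∏ a, f (e a) (m a) := by
      rw [← e.prod_comp]
      simp
    constructor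
    · rw [← (e.arrowCongr (Equiv.refl κ)).summable_iff]
      refine h1.congr fun m => ?_
      rw [Function.comp_apply, key]
    · rw [← (e.arrowCongr (Equiv.refl κ)).tsum_eq]
      simp_rw [key]
      rw [h2, ← e.prod_comp]
  · intro _ f _
    exact ⟨Summable.of_finite, by simp⟩
  · intro α _ ih inst f hf
    obtain rfl : inst = instFintypeOption := Subsingleton.elim _ _
    obtain ⟨h1, h2⟩ := ih (fun a => f (some a)) fun a => hf (some a)
    let e : (Option α → κ) ≃ κ × (α → κ) := Equiv.piOptionEquivProd
    have key (q : κ × (α → κ)) :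
        ∏ i, f i (e.symm q i) = f none q.1 * ∏ a, f (some a) (q.2 a) := by
      rw [Fintype.prod_option]
      rfl
    constructor
    · rw [← e.symm.summable_iff]
      refine ((hf none).mul_norm h1).congr fun q => ?_
      rw [Function.comp_apply, key]
    · rw [← e.symm.tsum_eq]
      simp_rw [key]
      rw [Fintype.prod_option, ← h2, tsum_mul_tsum_of_summable_norm (hf none) h1]

theorem summable_norm_prod_diagonal {ι κ : Type*} (c : ι → κ → ℂ)
    (hc : ∀ i, Summable fun k => ‖c i k‖) (s : Finset ι) (hs : s.Nonempty) :
    Summable fun k => ‖∏ i ∈ s, c i k‖ := by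
  classical
  induction hs using Finset.Nonempty.cons_induction with
  | singleton a => simpa using hc a
  | cons a s ha hs ih =>
    simp only [Finset.prod_cons]
    exact ((hc a).mul_norm ih).comp_injective (i := fun k => (k, k))
      fun _ _ h => (Prod.ext_iff.mp h).1

theorem setIntegral_Icc_pi_prod {ι E : Type*} [Fintype ι] [MeasureSpace E] [PartialOrder E]
    [SigmaFinite (volume : Measure E)] (a b : E) (g : ι → E → ℂ) :
    ∫ x in Set.Icc (fun _ : ι => a) (fun _ => b), ∏ i, g i (x i) =
      ∏ i, ∫ y in Set.Icc a b, g i y := by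
  rw [← Set.pi_univ_Icc, volume_pi, Measure.restrict_pi_pi]
  exact integral_fintype_prod_eq_prod _

section Torus

variable {L : ℕ}

/-- The character of the torus with frequencies `n`. -/
noncomputable def torusWave (n : Fin L → Fin L → ℤ) (x : Fin L → Fin L → ℝ) : ℂ :=
  ∏ i, ∏ j, wave (n i j) (x i j)

theorem norm_torusWave (n : Fin L → Fin L → ℤ) (x : Fin L → Fin L → ℝ) :
    ‖torusWave n x‖ = 1 := by
  simp [torusWave, norm_prod, norm_wave]

theorem continuous_torusWave (n : Fin L → Fin L → ℤ) : Continuous (torusWave n) := by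
  unfold torusWave
  refine continuous_finsetProd _ fun i _ => continuous_finsetProd _ fun j _ => ?_
  exact (continuous_wave _).comp (by fun_prop)

theorem torusWave_eq (n : Fin L → Fin L → ℤ) (x : Fin L → Fin L → ℝ) :
    torusWave n x =
      Complex.exp (2 * Real.pi * Complex.I * ((∑ i, ∑ j, n i j * x i j : ℝ) : ℂ)) := by
  simp only [torusWave, wave_eq, Complex.ofReal_sum, Finset.mul_sum, Complex.exp_sum]

theorem integral_torusWave (n : Fin L → Fin L → ℤ) :
    ∫ x in Set.Icc (0 : Fin L → Fin L → ℝ) 1, torusWave n x = if n = 0 then 1 else 0 := by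
  have h := setIntegral_Icc_pi_prod (0 : Fin L → ℝ) 1 fun i y => ∏ j, wave (n i j) (y j)
  have h' (i : Fin L) := setIntegral_Icc_pi_prod (0 : ℝ) 1 fun j => wave (n i j)
  refine h.trans ((Finset.prod_congr rfl fun i _ => h' i).trans ?_)
  simp_rw [integral_wave]
  split_ifs with hn
  · simp [hn]
  · obtain ⟨i, hi⟩ := Function.ne_iff.mp hn
    obtain ⟨j, hj⟩ := Function.ne_iff.mp hi
    exact Finset.prod_eq_zero (Finset.mem_univ i)
      (Finset.prod_eq_zero (Finset.mem_univ j) (if_neg hj))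

theorem integral_tsum_torusWave {κ : Type*} [Countable κ] (C : κ → ℂ)
    (hC : Summable fun k => ‖C k‖) (N : κ → Fin L → Fin L → ℤ) :
    ∫ x in Set.Icc (0 : Fin L → Fin L → ℝ) 1, ∑' k, C k * torusWave (N k) x =
      ∑' k, C k * if N k = 0 then 1 else 0 := by
  rw [← integral_tsum_of_summable_integral_norm]
  · simp_rw [integral_const_mul, integral_torusWave]
  · intro k
    exact ((continuous_torusWave (N k)).const_mul (C k)).continuousOn.integrableOn_compact
      isCompact_Icc
  · simp_rw [norm_mul, norm_torusWave, mul_one, integral_const, smul_eq_mul]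
    exact hC.mul_left _

/-- The frequencies equal to `q.1` on odd sites and to `q.2` on even sites. -/
def checkerboard (q : ℤ × ℤ) (p : Fin L × Fin L) : ℤ :=
  if Odd (p.1.val + p.2.val) then q.1 else q.2

theorem prod_checkerboard (c : Fin L × Fin L → ℤ → ℂ) (q : ℤ × ℤ) :
    ∏ p, c p (checkerboard q p) =
      (∏ p ∈ Finset.univ.filter (fun p : Fin L × Fin L => Odd (p.1.val + p.2.val)), c p q.1) *
        ∏ p ∈ Finset.univ.filter (fun p : Fin L × Fin L => Even (p.1.val + p.2.val)),
          c p q.2 := by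
  rw [← Finset.prod_filter_mul_prod_filter_not Finset.univ
    (fun p : Fin L × Fin L => Odd (p.1.val + p.2.val))]
  simp only [← Nat.not_odd_iff_even]
  congr 1 <;> refine Finset.prod_congr rfl fun p hp => ?_ <;>
    rw [checkerboard]
  · rw [if_pos (Finset.mem_filter.mp hp).2]
  · rw [if_neg (Finset.mem_filter.mp hp).2]

variable [NeZero L]

/-- The frequency of `x^a_{i,j}` in `∑ m_{i,j} ξ_{i,j}`. -/
def freqA (m : Fin L × Fin L → ℤ) (i j : Fin L) : ℤ :=
  m (i, j) + m (i - 1, j) - m (i - 1, j - 1) - m (i, j - 1)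

/-- The frequency of `x^b_{i,j}` in `∑ m_{i,j} ξ_{i,j}`. -/
def freqB (m : Fin L × Fin L → ℤ) (i j : Fin L) : ℤ :=
  m (i - 1, j) + m (i - 1, j - 1) - m (i, j - 1) - m (i, j)

theorem sum_shift (g : Fin L → Fin L → ℝ) (a b : Fin L) :
    ∑ i, ∑ j, g i j = ∑ i, ∑ j, g (i - a) (j - b) := by
  rw [← (Equiv.subRight a).sum_comp]
  refine Finset.sum_congr rfl fun i _ => ?_
  rw [← (Equiv.subRight b).sum_comp]
  rfl

theorem sum_loop_phase (m : Fin L × Fin L → ℤ) (xa xb : Fin L → Fin L → ℝ) :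
    ∑ i, ∑ j, m (i, j) * (xa i j + xa (i + 1) j + xb (i + 1) j + xb (i + 1) (j + 1)
        - xa (i + 1) (j + 1) - xa i (j + 1) - xb i (j + 1) - xb i j) =
      ∑ i, ∑ j, freqA m i j * xa i j + ∑ i, ∑ j, freqB m i j * xb i j := by
  have h10 (x : Fin L → Fin L → ℝ) := sum_shift (fun i j => m (i, j) * x (i + 1) j) 1 0
  have h11 (x : Fin L → Fin L → ℝ) := sum_shift (fun i j => m (i, j) * x (i + 1) (j + 1)) 1 1
  have h01 (x : Fin L → Fin L → ℝ) := sum_shift (fun i j => m (i, j) * x i (j + 1)) 0 1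
  simp only [sub_add_cancel, sub_zero] at h10 h11 h01
  simp only [freqA, freqB, Int.cast_add, Int.cast_sub, mul_add, mul_sub, add_mul, sub_mul,
    Finset.sum_add_distrib, Finset.sum_sub_distrib]
  linear_combination h10 xa + h10 xb + h11 xb - h11 xa - h01 xa - h01 xb

theorem prod_wave_loop (m : Fin L × Fin L → ℤ) (xa xb : Fin L → Fin L → ℝ) :
    ∏ p : Fin L × Fin L, wave (m p) (xa p.1 p.2 + xa (p.1 + 1) p.2 + xb (p.1 + 1) p.2
        + xb (p.1 + 1) (p.2 + 1) - xa (p.1 + 1) (p.2 + 1) - xa p.1 (p.2 + 1)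
        - xb p.1 (p.2 + 1) - xb p.1 p.2) =
      torusWave (freqA m) xa * torusWave (freqB m) xb := by
  rw [torusWave_eq, torusWave_eq, ← Complex.exp_add, ← mul_add, ← Complex.ofReal_add,
    ← sum_loop_phase, ← torusWave_eq (fun i j => m (i, j)), torusWave, Fintype.prod_prod_type]

theorem odd_val_sub_one (heven : Even L) (i : Fin L) : Odd (i - 1).val ↔ ¬ Odd i.val := by
  obtain ⟨j, rfl⟩ : ∃ j, i = j + 1 := ⟨i - 1, by simp⟩
  obtain ⟨K, hK⟩ := heven
  have hL := NeZero.ne L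
  have hj := j.isLt
  have h1 : (1 : Fin L).val = 1 := by
    rw [Fin.val_one']
    exact Nat.mod_eq_of_lt (by omega)
  rw [add_sub_cancel_right, Fin.val_add_eq_ite, h1]
  simp only [Nat.odd_iff]
  split_ifs <;> omega

theorem freq_checkerboard (heven : Even L) (q : ℤ × ℤ) :
    freqA (L := L) (checkerboard q) = 0 ∧ freqB (L := L) (checkerboard q) = 0 := by
  constructor <;> ext i j <;>
    simp only [freqA, freqB, checkerboard, Nat.odd_add, ← Nat.not_odd_iff_even,
      odd_val_sub_one heven, Pi.zero_apply] <;>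
    by_cases hi : Odd i.val <;> by_cases hj : Odd j.val <;> simp [hi, hj]

theorem exists_checkerboard (m : Fin L × Fin L → ℤ) (hA : freqA m = 0) (hB : freqB m = 0) :
    ∃ q, checkerboard q = m := by
  have hA' (i j : Fin L) := congrFun (congrFun hA (i + 1)) (j + 1)
  have hB' (i j : Fin L) := congrFun (congrFun hB (i + 1)) (j + 1)
  simp only [freqA, freqB, add_sub_cancel_right, Pi.zero_apply] at hA' hB'
  let M (a b : ℕ) : ℤ := m (Fin.ofNat L a, Fin.ofNat L b)
  have hsucc (a : ℕ) : Fin.ofNat L (a + 1) = Fin.ofNat L a + 1 := by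
    ext
    simp [Fin.val_add]
  have hdiag (a b : ℕ) : M (a + 1) (b + 1) = M a b := by
    have h1 := hA' (Fin.ofNat L a) (Fin.ofNat L b)
    have h2 := hB' (Fin.ofNat L a) (Fin.ofNat L b)
    simp only [M, hsucc]
    omega
  have hanti (a b : ℕ) : M (a + 1) b = M a (b + 1) := by
    have h1 := hA' (Fin.ofNat L a) (Fin.ofNat L b)
    have h2 := hB' (Fin.ofNat L a) (Fin.ofNat L b)
    simp only [M, hsucc]
    omega
  have hrow (a b : ℕ) : M a b = M 0 (a + b) := by
    induction a generalizing b with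
    | zero => simp
    | succ a ih =>
      rw [hanti, ih]
      congr 1
      omega
  have hper (r k : ℕ) : M 0 (r + 2 * k) = M 0 r := by
    induction k with
    | zero => rfl
    | succ k ih => rw [← ih, ← hdiag 0 (r + 2 * k), hanti]; rfl
  have hM (p : Fin L × Fin L) : m p = M 0 (p.1.val + p.2.val) := by
    rw [← hrow]
    simp [M]
  refine ⟨(M 0 1, M 0 0), funext fun p => ?_⟩
  rw [hM, checkerboard]
  split_ifs with h
  · obtain ⟨k, hk⟩ := h
    rw [hk, add_comm, hper]
  · obtain ⟨k, hk⟩ := Nat.not_odd_iff_even.mp h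
    rw [hk, ← two_mul, ← zero_add (2 * k), hper]

theorem filter_parity_nonempty (heven : Even L) :
    (Finset.univ.filter fun p : Fin L × Fin L => Odd (p.1.val + p.2.val)).Nonempty ∧
      (Finset.univ.filter fun p : Fin L × Fin L => Even (p.1.val + p.2.val)).Nonempty := by
  obtain ⟨K, hK⟩ := heven
  have hL := NeZero.ne L
  refine ⟨⟨(⟨0, by omega⟩, ⟨1, by omega⟩), by simp⟩, ⟨(0, 0), by simp⟩⟩

theorem checkerboard_injective (heven : Even L) :
    Function.Injective (checkerboard : ℤ × ℤ → Fin L × Fin L → ℤ) := by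
  intro q q' h
  obtain ⟨⟨p, hp⟩, ⟨p', hp'⟩⟩ := filter_parity_nonempty heven
  have h1 := congrFun h p
  have h2 := congrFun h p'
  simp only [Finset.mem_filter, Finset.mem_univ, true_and, ← Nat.not_odd_iff_even] at hp hp'
  simp only [checkerboard, hp, hp', if_true, if_false] at h1 h2
  exact Prod.ext h1 h2

end Torus

theorem stmt5 (L : ℕ) [NeZero L] (heven : Even L) (f : Fin L → Fin L → ℝ → ℂ)
    (hcont : ∀ i j, Continuous (f i j))
    (hper : ∀ i j (x : ℝ), f i j (x + 1) = f i j x)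
    (habs : ∀ i j, Summable fun ℓ : ℤ => ‖fourierCoeffR (f i j) ℓ‖)
    (hrep : ∀ i j (x : ℝ),
      f i j x = ∑' ℓ : ℤ, fourierCoeffR (f i j) ℓ *
        Complex.exp (2 * Real.pi * Complex.I * ℓ * x)) :
    (∫ xa in Set.Icc (0 : Fin L → Fin L → ℝ) 1,
      ∫ xb in Set.Icc (0 : Fin L → Fin L → ℝ) 1,
        ∏ i, ∏ j, f i j
          (xa i j + xa (i + 1) j + xb (i + 1) j + xb (i + 1) (j + 1)
            - xa (i + 1) (j + 1) - xa i (j + 1) - xb i (j + 1) - xb i j)) =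
      (∑' ℓ : ℤ, ∏ p ∈ Finset.univ.filter
          (fun p : Fin L × Fin L => Odd (p.1.val + p.2.val)),
          fourierCoeffR (f p.1 p.2) ℓ) *
      (∑' ℓ : ℤ, ∏ p ∈ Finset.univ.filter
          (fun p : Fin L × Fin L => Even (p.1.val + p.2.val)),
          fourierCoeffR (f p.1 p.2) ℓ) := by
  let c (p : Fin L × Fin L) (ℓ : ℤ) : ℂ := fourierCoeffR (f p.1 p.2) ℓ
  have hc (p : Fin L × Fin L) : Summable fun ℓ => ‖c p ℓ‖ := habs p.1 p.2
  let C (m : Fin L × Fin L → ℤ) : ℂ := ∏ p, c p (m p)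
  have hC : Summable fun m => ‖C m‖ := (summable_norm_prod_and_tsum_prod c hc).1
  have hexpand (xa xb : Fin L → Fin L → ℝ) :
      ∏ i, ∏ j, f i j
          (xa i j + xa (i + 1) j + xb (i + 1) j + xb (i + 1) (j + 1)
            - xa (i + 1) (j + 1) - xa i (j + 1) - xb i (j + 1) - xb i j) =
        ∑' m, C m * torusWave (freqA m) xa * torusWave (freqB m) xb := by
    let ξ (p : Fin L × Fin L) : ℝ := xa p.1 p.2 + xa (p.1 + 1) p.2 + xb (p.1 + 1) p.2
        + xb (p.1 + 1) (p.2 + 1) - xa (p.1 + 1) (p.2 + 1) - xa p.1 (p.2 + 1)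
        - xb p.1 (p.2 + 1) - xb p.1 p.2
    have h := (summable_norm_prod_and_tsum_prod (fun p ℓ => c p ℓ * wave ℓ (ξ p))
      fun p => by simpa only [norm_mul, norm_wave, mul_one] using hc p).2
    simp_rw [Finset.prod_mul_distrib, ξ, prod_wave_loop, ← mul_assoc] at h
    rw [← Fintype.prod_prod_type' fun i j => f i j
          (xa i j + xa (i + 1) j + xb (i + 1) j + xb (i + 1) (j + 1)
            - xa (i + 1) (j + 1) - xa i (j + 1) - xb i (j + 1) - xb i j)]
    refine Eq.trans (Finset.prod_congr rfl fun p _ => ?_) h.symm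
    exact hrep p.1 p.2 _
  have hCB : Summable fun m => ‖C m * if freqB m = 0 then 1 else 0‖ := by
    refine Summable.of_nonneg_of_le (fun _ => norm_nonneg _) (fun m => ?_) hC
    split_ifs <;> simp
  have hinner (xa : Fin L → Fin L → ℝ) := integral_tsum_torusWave
    (fun m => C m * torusWave (freqA m) xa)
    (by simpa only [norm_mul, norm_torusWave, mul_one] using hC) freqB
  simp_rw [hexpand, hinner, mul_right_comm _ (torusWave _ _)]
  rw [integral_tsum_torusWave _ hCB,
    tsum_mul_tsum_of_summable_norm
      (summable_norm_prod_diagonal c hc _ (filter_parity_nonempty heven).1)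
      (summable_norm_prod_diagonal c hc _ (filter_parity_nonempty heven).2),
    ← (checkerboard_injective heven).tsum_eq]
  · refine tsum_congr fun q => ?_
    rw [if_pos (freq_checkerboard heven q).1, if_pos (freq_checkerboard heven q).2, mul_one,
      mul_one]
    exact prod_checkerboard c q
  · intro m hm
    simp only [Function.mem_support, ne_eq, mul_eq_zero, not_or, ite_eq_right_iff, one_ne_zero,
      imp_false, not_not] at hm
    exact exists_checkerboard m hm.2 hm.1.2
end
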